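/- For a vector of indeterminates x = (x_1,...,x_k), an indeterminate λ, and positive integers n, k, the determinant of the matrix indexed by compositions α, β of n into k non-negative parts, with entry ∏_{i=1}^k binom(x_i+λα_i+β_i, β_i), equals λ^{(k-1)·binom(n+k-1,k)} · ∏_{i=1}^n ((|x|+(λ+1)n+k-i)/i)^{binom(n+k-i-1,k-1)}, with |x| = x_1+···+x_k. -/

import Mathlib

open Finset

/-- The polynomial binomial coefficient `y(y-1)⋯(y-m+1)/m!`. -/
noncomputable def bch {F : Type*} [Field F] (y : F) (m : ℕ) : F :=
  (∏ j ∈ Finset.range m, (y - (j : F))) / (m.factorial : F)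

/-- Compositions of `n` into `k` non-negative parts. -/
abbrev Comp (n k : ℕ) := {f : Fin k → Fin (n + 1) // ∑ i, (f i : ℕ) = n}

/-- Compositions of `n` into `k` strictly positive parts. -/
abbrev CompPos (n k : ℕ) :=
  {f : Fin k → Fin (n + 1) // (∑ i, (f i : ℕ)) = n ∧ ∀ i, 0 < (f i : ℕ)}

/-!
The arguments `x_i + λ α_i` in row `α` have the sum `s = |x| + λ n`, whatever `α` is.  Eliminating
the first of them, column `β` consists of the values of one polynomial of degree at most `n`,
depending on `β` and `s` only, at the points `(x_i + λ α_i)_{i ≥ 2}`.  The affine substitution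
`t ↦ y + λ t` acts on the polynomials of degree at most `n` by a triangular matrix in the monomial
basis, with determinant a power of `λ`, so the determinant is this power of `λ` times a function of
`s` alone.  That function is found at `λ = -1`, `x = (s + n + k - 1, -1, …, -1)`, where the matrix
itself is triangular.
-/

theorem det_eq_prod_diag_of_ne_zero_imp_le {ι α R : Type*} [Fintype ι] [DecidableEq ι]
    [PartialOrder α] [CommRing R] (e : ι ↪ α) {M : Matrix ι ι R}
    (hM : ∀ i j, M i j ≠ 0 → e i ≤ e j) : M.det = ∏ i, M i i := by
  let : LinearOrder ι :=
    LinearOrder.lift' (fun i => toLinearExtension (e i)) fun _ _ h => e.injective h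
  refine Matrix.det_of_isUpperTriangular fun i j hji => ?_
  by_contra hne
  exact (toLinearExtension.monotone (hM i j hne)).not_gt hji

section AffineSubstitution

open MvPolynomial

variable {ι σ R : Type*} [Fintype σ] [CommRing R]

/-- The multivariate Vandermonde matrix, of the monomials with exponents `e` at the points `t`. -/
def monomialMatrix (e : ι → σ → ℕ) (t : ι → σ → R) : Matrix ι ι R :=
  Matrix.of fun i j => ∏ s, t i s ^ e j s

/-- The matrix whose columns are the coordinates of the polynomials `P j` in the monomials with
exponents `e`. -/
noncomputable def coeffMatrix (e : ι → σ → ℕ) (P : ι → MvPolynomial σ R) : Matrix ι ι R :=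
  Matrix.of fun i j => (P j).coeff (Finsupp.equivFunOnFinite.symm (e i))

/-- The matrix of the substitution `t ↦ y + c • t` in the monomials with exponents `e`: its columns
hold the binomial expansions of the monomials in `y + c • t`. -/
def affineMatrix (e : ι → σ → ℕ) (y : σ → R) (c : R) : Matrix ι ι R :=
  Matrix.of fun i j => ∏ s, c ^ e i s * y s ^ (e j s - e i s) * ((e j s).choose (e i s) : R)

theorem prod_add_mul_pow [DecidableEq σ] (y t : σ → R) (c : R) (d : σ → ℕ) :
    ∏ s, (y s + c * t s) ^ d s =
      ∑ b ∈ Iic d, (∏ s, t s ^ b s) *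
        ∏ s, c ^ b s * y s ^ (d s - b s) * ((d s).choose (b s) : R) := by
  calc ∏ s, (y s + c * t s) ^ d s
      = ∏ s, ∑ b ∈ Iic (d s), t s ^ b * (c ^ b * y s ^ (d s - b) * ((d s).choose b : R)) := by
        refine prod_congr rfl fun s _ => ?_
        rw [add_comm, add_pow, Nat.range_succ_eq_Iic]
        exact sum_congr rfl fun b _ => by ring
    _ = ∑ b ∈ Iic d, ∏ s, t s ^ b s * (c ^ b s * y s ^ (d s - b s) * ((d s).choose (b s) : R)) :=
        prod_univ_sum _ fun s b => t s ^ b * (c ^ b * y s ^ (d s - b) * ((d s).choose b : R))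
    _ = _ := by simp only [prod_mul_distrib]

theorem le_of_prod_choose_ne_zero {d b : σ → ℕ} (u : σ → R)
    (h : ∏ s, u s * ((d s).choose (b s) : R) ≠ 0) : b ≤ d := by
  intro s
  contrapose! h
  exact prod_eq_zero (mem_univ s) (by simp [Nat.choose_eq_zero_of_lt h])

variable [Fintype ι]

theorem of_eval_eq_monomialMatrix_mul_coeffMatrix (e : ι ↪ (σ → ℕ)) (P : ι → MvPolynomial σ R)
    (hP : ∀ j, ∀ d ∈ (P j).support, ⇑d ∈ Set.range e) (t : ι → σ → R) :
    (Matrix.of fun i j => eval (t i) (P j)) = monomialMatrix e t * coeffMatrix e P := by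
  classical
  ext i j
  let e' : ι ↪ (σ →₀ ℕ) := e.trans Finsupp.equivFunOnFinite.symm.toEmbedding
  have hsupp : (P j).support ⊆ univ.map e' := fun d hd => by
    obtain ⟨a, ha⟩ := hP j d hd
    exact mem_map.2 ⟨a, mem_univ a, by simp [e', ha]⟩
  calc eval (t i) (P j) = ∑ d ∈ univ.map e', (P j).coeff d * ∏ s, t i s ^ d s := by
        rw [eval_eq']
        exact sum_subset hsupp fun d _ hd => by rw [notMem_support_iff.1 hd, zero_mul]
    _ = (monomialMatrix e t * coeffMatrix e P) i j := by
        simp [monomialMatrix, coeffMatrix, Matrix.mul_apply, e', mul_comm]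

theorem monomialMatrix_add_mul (e : ι ↪ (σ → ℕ)) (he : IsLowerSet (Set.range e)) (y : σ → R)
    (c : R) (t : ι → σ → R) :
    monomialMatrix e (fun i s => y s + c * t i s) = monomialMatrix e t * affineMatrix e y c := by
  classical
  ext i j
  have hsub : Iic (e j) ⊆ univ.map e := fun d hd => by
    simpa using he (mem_Iic.1 hd) (Set.mem_range_self j)
  simp only [monomialMatrix, affineMatrix, Matrix.mul_apply, Matrix.of_apply]
  rw [prod_add_mul_pow, sum_subset hsub, sum_map]
  intro d _ hd
  by_contra hne
  exact hd (mem_Iic.2 (le_of_prod_choose_ne_zero _ (right_ne_zero_of_mul hne)))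

variable [DecidableEq ι]

theorem det_affineMatrix (e : ι ↪ (σ → ℕ)) (y : σ → R) (c : R) :
    (affineMatrix e y c).det = ∏ i, c ^ ∑ s, e i s := by
  have hle : ∀ i j, affineMatrix e y c i j ≠ 0 → e i ≤ e j := fun _ _ h =>
    le_of_prod_choose_ne_zero _ h
  rw [det_eq_prod_diag_of_ne_zero_imp_le e hle]
  simp [affineMatrix, prod_pow_eq_pow_sum]

theorem det_eval_add_mul (e : ι ↪ (σ → ℕ)) (he : IsLowerSet (Set.range e))
    (P : ι → MvPolynomial σ R) (hP : ∀ j, ∀ d ∈ (P j).support, ⇑d ∈ Set.range e)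
    (y : σ → R) (c : R) (t : ι → σ → R) :
    (Matrix.of fun i j => eval (fun s => y s + c * t i s) (P j)).det =
      (∏ i, c ^ ∑ s, e i s) * (Matrix.of fun i j => eval (t i) (P j)).det := by
  rw [of_eval_eq_monomialMatrix_mul_coeffMatrix e P hP,
    of_eval_eq_monomialMatrix_mul_coeffMatrix e P hP, monomialMatrix_add_mul e he y c t,
    Matrix.det_mul, Matrix.det_mul, Matrix.det_mul, det_affineMatrix]
  ring

end AffineSubstitution

theorem sum_Icc_sub_add_choose (n m : ℕ) :
    ∑ j ∈ Icc 1 n, (n - j + m).choose m = (n + m).choose (m + 1) := by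
  calc ∑ j ∈ Icc 1 n, (n - j + m).choose m = ∑ i ∈ range n, (i + m).choose m :=
        sum_nbij' (n - ·) (n - ·) (by simp; lia) (by simp; lia) (by simp; lia) (by simp; lia)
          (by simp)
    _ = (n + m).choose (m + 1) := by
        cases n with
        | zero => simp
        | succ n => rw [Nat.sum_range_add_choose, Nat.add_right_comm]

namespace Comp

variable {n k m : ℕ}

/-- Compositions as functions to `ℕ`: the bound on the parts in `Comp` is automatic. -/
def equivNatSum (n k : ℕ) : Comp n k ≃ {d : Fin k → ℕ // ∑ i, d i = n} where
  toFun β := ⟨fun i => β.1 i, β.2⟩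
  invFun d := ⟨fun i => ⟨d.1 i, Nat.lt_succ_of_le
    ((single_le_sum_of_canonicallyOrdered (mem_univ i)).trans_eq d.2)⟩, d.2⟩
  left_inv _ := rfl
  right_inv _ := rfl

theorem equivNatSum_symm_apply (d : {d : Fin k → ℕ // ∑ i, d i = n}) (i : Fin k) :
    (((equivNatSum n k).symm d).1 i : ℕ) = d.1 i := rfl

theorem card_eq_choose : Fintype.card (Comp n (m + 1)) = (n + m).choose m := by
  rw [Fintype.card_congr ((equivNatSum n (m + 1)).trans (Sym.equivNatSumOfFintype _ n).symm),
    Sym.card_sym_eq_choose, Fintype.card_fin, show m + 1 + n - 1 = n + m by lia,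
    Nat.choose_symm_add]

/-- All parts but the first.  They determine the composition and serve as the exponents of the
monomials of degree at most `n` in `m` variables. -/
def tail : Comp n (m + 1) ↪ (Fin m → ℕ) where
  toFun γ i := γ.1 i.succ
  inj' γ δ h := by
    have hγ := γ.2
    have hδ := δ.2
    have htail : ∀ i : Fin m, (γ.1 i.succ : ℕ) = δ.1 i.succ := congrFun h
    simp only [Fin.sum_univ_succ, htail] at hγ hδ
    have hhead : (γ.1 0 : ℕ) = δ.1 0 := by lia
    exact Subtype.ext (funext fun i => Fin.ext (i.cases hhead htail))

theorem tail_apply (γ : Comp n (m + 1)) (i : Fin m) : tail γ i = γ.1 i.succ := rfl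

theorem head_add_sum_tail (γ : Comp n (m + 1)) : (γ.1 0 : ℕ) + ∑ i, tail γ i = n := by
  simpa only [Fin.sum_univ_succ, tail_apply] using γ.2

theorem mem_range_tail {d : Fin m → ℕ} :
    d ∈ Set.range (tail : Comp n (m + 1) ↪ (Fin m → ℕ)) ↔ ∑ i, d i ≤ n := by
  constructor
  · rintro ⟨γ, rfl⟩
    have := head_add_sum_tail γ
    lia
  · intro hd
    let c : Fin (m + 1) → ℕ := Fin.cons (n - ∑ i, d i) d
    have hc : ∑ i, c i = n := by simp [c, Fin.sum_univ_succ, hd]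
    exact ⟨(equivNatSum n (m + 1)).symm ⟨c, hc⟩, rfl⟩

theorem isLowerSet_range_tail :
    IsLowerSet (Set.range (tail : Comp n (m + 1) ↪ (Fin m → ℕ))) := by
  intro d b hbd hd
  rw [mem_range_tail] at hd ⊢
  exact (sum_le_sum fun i _ => hbd i).trans hd

theorem card_filter_le_apply (i : Fin (m + 1)) {j : ℕ} (hj : j ≤ n) :
    #{β : Comp n (m + 1) | j ≤ (β.1 i : ℕ)} = (n - j + m).choose m := by
  let single : Fin (m + 1) → ℕ := Pi.single i j
  have sum_add_single (d : Fin (m + 1) → ℕ) : ∑ a, (d + single) a = ∑ a, d a + j := by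
    simp [single, sum_add_distrib]
  let parts (δ : Comp (n - j) (m + 1)) : Fin (m + 1) → ℕ := equivNatSum _ _ δ
  have hsum (δ : Comp (n - j) (m + 1)) : ∑ a, (parts δ + single) a = n := by
    rw [sum_add_single, (equivNatSum _ _ δ).2, Nat.sub_add_cancel hj]
  rw [← card_eq_choose, ← card_univ]
  refine (card_nbij (fun δ => (equivNatSum n (m + 1)).symm ⟨parts δ + single, hsum δ⟩)
    ?_ ?_ ?_).symm
  · intro δ _
    simp [equivNatSum_symm_apply, single]
  · intro δ _ δ' _ h
    have hparts := congrArg Subtype.val ((equivNatSum n (m + 1)).symm.injective h)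
    exact (equivNatSum _ _).injective (Subtype.ext (add_right_cancel hparts))
  · intro β hβ
    let d : Fin (m + 1) → ℕ := equivNatSum _ _ β
    have hle : single ≤ d := update_le_iff.2 ⟨(mem_filter.1 hβ).2, fun _ _ => Nat.zero_le _⟩
    have hcancel : d - single + single = d := tsub_add_cancel_of_le hle
    have hd : ∑ a, d a = n := (equivNatSum _ _ β).2
    have hdsum : ∑ a, (d - single) a = n - j :=
      Nat.eq_sub_of_add_eq (by rw [← sum_add_single, hcancel, hd])
    refine ⟨(equivNatSum _ _).symm ⟨d - single, hdsum⟩, mem_coe.2 (mem_univ _), ?_⟩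
    exact (equivNatSum n (m + 1)).injective (Subtype.ext hcancel)

theorem prod_prod_Icc_apply {M : Type*} [CommMonoid M] (f : ℕ → M) (i : Fin (m + 1)) :
    ∏ β : Comp n (m + 1), ∏ j ∈ Icc 1 (β.1 i : ℕ), f j =
      ∏ j ∈ Icc 1 n, f j ^ (n - j + m).choose m := by
  calc ∏ β : Comp n (m + 1), ∏ j ∈ Icc 1 (β.1 i : ℕ), f j
      = ∏ j ∈ Icc 1 n, ∏ β : Comp n (m + 1) with j ≤ (β.1 i : ℕ), f j :=
        prod_comm' fun β j => by
          have := (β.1 i).is_lt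
          simp only [mem_univ, mem_Icc, mem_filter]
          lia
    _ = ∏ j ∈ Icc 1 n, f j ^ (n - j + m).choose m :=
        prod_congr rfl fun j hj => by
          rw [prod_const, card_filter_le_apply i (mem_Icc.1 hj).2]

theorem prod_pow_apply {M : Type*} [CommMonoid M] (a : M) (i : Fin (m + 1)) :
    ∏ β : Comp n (m + 1), a ^ (β.1 i : ℕ) = a ^ (n + m).choose (m + 1) := by
  calc ∏ β : Comp n (m + 1), a ^ (β.1 i : ℕ)
      = ∏ β : Comp n (m + 1), ∏ _j ∈ Icc 1 (β.1 i : ℕ), a := by simp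
    _ = a ^ (n + m).choose (m + 1) := by
        rw [prod_prod_Icc_apply, prod_pow_eq_pow_sum, sum_Icc_sub_add_choose]

theorem prod_pow_sum_tail {M : Type*} [CommMonoid M] (a : M) :
    ∏ γ : Comp n (m + 1), a ^ ∑ i, tail γ i = a ^ (m * (n + m).choose (m + 1)) := by
  calc ∏ γ : Comp n (m + 1), a ^ ∑ i, tail γ i
      = ∏ i : Fin m, ∏ γ : Comp n (m + 1), a ^ (γ.1 i.succ : ℕ) := by
        simp only [← prod_pow_eq_pow_sum, tail_apply]
        exact prod_comm
    _ = a ^ (m * (n + m).choose (m + 1)) := by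
        simp [prod_pow_apply, ← pow_mul, mul_comm]

end Comp

section Bch

variable {F : Type*} [Field F]

theorem bch_eq_prod_Icc (y : F) (b : ℕ) :
    bch y b = ∏ i ∈ Icc 1 b, ((y + 1 - (i : F)) / (i : F)) := by
  unfold bch
  induction b with
  | zero => simp
  | succ b ih =>
    rw [prod_Icc_succ_top b.succ_pos, ← ih, prod_range_succ, Nat.factorial_succ, Nat.cast_mul,
      mul_comm (_ : F) (b.factorial : F), mul_div_mul_comm, Nat.cast_succ, add_sub_add_right_eq_sub]

theorem bch_neg_one [CharZero F] (b : ℕ) : bch (-1 : F) b = (-1) ^ b := by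
  have hprod : ∏ j ∈ range b, ((-1 : F) - j) = (-1) ^ b * b.factorial := by
    calc ∏ j ∈ range b, ((-1 : F) - j) = ∏ j ∈ range b, (-1) * ((j + 1 : ℕ) : F) :=
          prod_congr rfl fun j _ => by push_cast; ring
      _ = (-1) ^ b * b.factorial := by
          rw [prod_mul_distrib, prod_const, card_range, ← Nat.cast_prod,
            prod_range_add_one_eq_factorial]
  rw [bch, hprod, mul_div_cancel_right₀ _ (Nat.cast_ne_zero.2 b.factorial_ne_zero)]

theorem bch_natCast_of_lt {a b : ℕ} (h : a < b) : bch (a : F) b = 0 := by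
  rw [bch, prod_eq_zero (mem_range.2 h) (sub_self _), zero_div]

end Bch

section BinomPoly

open MvPolynomial

variable {F σ : Type*} [Field F]

/-- The polynomial `binom(P + b, b)`, for a polynomial `P`. -/
noncomputable def binomPoly (P : MvPolynomial σ F) (b : ℕ) : MvPolynomial σ F :=
  (∏ j ∈ range b, (P + C ((b : F) - j))) * C (b.factorial : F)⁻¹

theorem eval_binomPoly (P : MvPolynomial σ F) (b : ℕ) (t : σ → F) :
    eval t (binomPoly P b) = bch (eval t P + b) b := by
  simp [binomPoly, bch, map_prod, div_eq_mul_inv, add_sub_assoc]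

theorem totalDegree_binomPoly_le {P : MvPolynomial σ F} (hP : P.totalDegree ≤ 1) (b : ℕ) :
    (binomPoly P b).totalDegree ≤ b := by
  have hfactor (c : F) : (P + C c).totalDegree ≤ 1 :=
    (totalDegree_add P (C c)).trans (by simpa using hP)
  have hprod : (∏ j ∈ range b, (P + C ((b : F) - j))).totalDegree ≤ b :=
    calc (∏ j ∈ range b, (P + C ((b : F) - j))).totalDegree
        ≤ ∑ j ∈ range b, (P + C ((b : F) - j)).totalDegree := totalDegree_finsetProd _ _
      _ ≤ ∑ _j ∈ range b, 1 := by gcongr; exact hfactor _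
      _ = b := by simp
  exact (totalDegree_mul _ _).trans (by rwa [totalDegree_C, add_zero])

end BinomPoly

section BinomMatrix

open MvPolynomial

variable {F : Type*} [Field F] {n m : ℕ}

/-- The matrix whose determinant is evaluated here, with `binom(x_i + l α_i + β_i, β_i)` as the
factors of the entry at `(α, β)`. -/
noncomputable def binomMatrix (n : ℕ) {k : ℕ} (x : Fin k → F) (l : F) :
    Matrix (Comp n k) (Comp n k) F :=
  Matrix.of fun α β => ∏ i, bch (x i + l * (α.1 i : ℕ) + (β.1 i : ℕ)) (β.1 i)

/-- The polynomial in the last `m` arguments of the binomial coefficients whose values form column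
`β` of `binomMatrix`, where `s` is the sum of all `m + 1` arguments. -/
noncomputable def columnPoly (s : F) (β : Comp n (m + 1)) : MvPolynomial (Fin m) F :=
  binomPoly (C s - ∑ i, X i) (β.1 0) * ∏ i, binomPoly (X i) (β.tail i)

theorem totalDegree_columnPoly_le (s : F) (β : Comp n (m + 1)) :
    (columnPoly s β).totalDegree ≤ n := by
  have hlin : (C s - ∑ i, X i : MvPolynomial (Fin m) F).totalDegree ≤ 1 :=
    (totalDegree_sub _ _).trans <| max_le (by simp) <|
      totalDegree_finsetSum_le fun i _ => (totalDegree_X i).le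
  calc (columnPoly s β).totalDegree
      ≤ (binomPoly (C s - ∑ i, X i) (β.1 0)).totalDegree +
          (∏ i, binomPoly (X i : MvPolynomial (Fin m) F) (β.tail i)).totalDegree :=
        totalDegree_mul _ _
    _ ≤ β.1 0 + ∑ i, β.tail i :=
        add_le_add (totalDegree_binomPoly_le hlin _) <| (totalDegree_finsetProd _ _).trans <|
          sum_le_sum fun i _ => totalDegree_binomPoly_le (totalDegree_X i).le _
    _ = n := β.head_add_sum_tail

theorem mem_range_tail_of_mem_support_columnPoly (s : F) (β : Comp n (m + 1)) {d : Fin m →₀ ℕ}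
    (hd : d ∈ (columnPoly s β).support) :
    ⇑d ∈ Set.range (Comp.tail : Comp n (m + 1) ↪ (Fin m → ℕ)) := by
  rw [Comp.mem_range_tail, ← d.sum_fintype (fun _ e => e) fun _ => rfl]
  exact (le_totalDegree hd).trans (totalDegree_columnPoly_le s β)

theorem binomMatrix_eq_of_eval (x : Fin (m + 1) → F) (l : F) :
    binomMatrix n x l = Matrix.of fun α β =>
      eval (fun i => x i.succ + l * (α.tail i : F)) (columnPoly (∑ i, x i + l * n) β) := by
  ext α β
  have hn : (n : F) = (α.1 0 : ℕ) + ∑ i, (α.tail i : F) := by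
    rw [← Nat.cast_sum, ← Nat.cast_add, α.head_add_sum_tail]
  have hhead : ∑ i, x i + l * n - ∑ i, (x i.succ + l * (α.tail i : F)) =
      x 0 + l * (α.1 0 : ℕ) := by
    rw [hn, Fin.sum_univ_succ, sum_add_distrib, ← mul_sum]
    ring
  simp only [binomMatrix, columnPoly, Matrix.of_apply, map_mul, map_prod, eval_binomPoly, map_sub,
    map_sum, eval_C, eval_X, hhead]
  exact Fin.prod_univ_succ _

theorem det_binomMatrix_eq_prod_pow_mul (x : Fin (m + 1) → F) (l : F) :
    (binomMatrix n x l).det = (∏ γ : Comp n (m + 1), l ^ ∑ i, γ.tail i) *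
      (Matrix.of fun α β : Comp n (m + 1) =>
        eval (fun i => (α.tail i : F)) (columnPoly (∑ i, x i + l * n) β)).det := by
  rw [binomMatrix_eq_of_eval]
  exact det_eval_add_mul Comp.tail Comp.isLowerSet_range_tail _
    (fun β _ => mem_range_tail_of_mem_support_columnPoly _ β) _ l _

variable [CharZero F]

theorem det_binomMatrix_neg_one (X : F) :
    (binomMatrix n (Fin.cons X fun _ : Fin m => (-1 : F)) (-1)).det =
      (∏ γ : Comp n (m + 1), (-1 : F) ^ ∑ i, γ.tail i) *
        ∏ β : Comp n (m + 1), bch X (β.1 0) := by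
  have htri : ∀ β α : Comp n (m + 1),
      (binomMatrix n (Fin.cons X fun _ : Fin m => (-1 : F)) (-1)).transpose β α ≠ 0 →
        β.tail ≤ α.tail := by
    intro β α hne i
    contrapose! hne
    have hzero : bch (-1 + -1 * ((α.1 i.succ : ℕ) : F) + (β.1 i.succ : ℕ)) (β.1 i.succ) = 0 := by
      obtain ⟨c, hc⟩ := Nat.exists_eq_add_of_lt hne
      rw [Comp.tail_apply, Comp.tail_apply] at hc
      have hcast : (-1 : F) + -1 * ((α.1 i.succ : ℕ) : F) + (β.1 i.succ : ℕ) = c := by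
        rw [hc]
        push_cast
        ring
      rw [hcast, bch_natCast_of_lt (by lia)]
    exact prod_eq_zero (mem_univ i.succ) hzero
  rw [← Matrix.det_transpose, det_eq_prod_diag_of_ne_zero_imp_le Comp.tail htri,
    ← prod_mul_distrib]
  refine prod_congr rfl fun β _ => ?_
  simp [binomMatrix, Fin.prod_univ_succ, bch_neg_one, prod_pow_eq_pow_sum, Comp.tail_apply,
    mul_comm]

theorem det_binomMatrix (x : Fin (m + 1) → F) (l : F) :
    (binomMatrix n x l).det = (∏ γ : Comp n (m + 1), l ^ ∑ i, γ.tail i) *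
      ∏ β : Comp n (m + 1), bch (∑ i, x i + l * n + n + m) (β.1 0) := by
  have hneg := det_binomMatrix_eq_prod_pow_mul (n := n)
    (Fin.cons (∑ i, x i + l * n + n + m) fun _ : Fin m => (-1 : F)) (-1)
  have hsum : ∑ i, (Fin.cons (∑ i, x i + l * n + n + m) fun _ => -1 : Fin (m + 1) → F) i + -1 * n =
      ∑ i, x i + l * n := by
    simp [Fin.sum_univ_succ]
  have hne : ∏ γ : Comp n (m + 1), (-1 : F) ^ ∑ i, γ.tail i ≠ 0 :=
    prod_ne_zero_iff.2 fun _ _ => pow_ne_zero _ (neg_ne_zero.2 one_ne_zero)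
  rw [det_binomMatrix_neg_one, hsum] at hneg
  rw [det_binomMatrix_eq_prod_pow_mul, mul_left_cancel₀ hne hneg]

end BinomMatrix

theorem stmt9 {F : Type*} [Field F] [CharZero F] (n k : ℕ) (hn : 0 < n) (hk : 0 < k)
    (x : Fin k → F) (l : F) :
    Matrix.det (Matrix.of fun α β : Comp n k =>
        ∏ i, bch (x i + l * ((α.1 i : ℕ) : F) + ((β.1 i : ℕ) : F)) ((β.1 i : ℕ))) =
      l ^ ((k - 1) * (n + k - 1).choose k) *
        ∏ i ∈ Finset.Icc 1 n,
          (((∑ j, x j) + (l + 1) * (n : F) + (k : F) - (i : F)) / (i : F)) ^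
            ((n + k - i - 1).choose (k - 1)) := by
  obtain ⟨m, rfl⟩ := Nat.exists_eq_add_one.2 hk
  have hdet : (binomMatrix n x l).det = l ^ (m * (n + m).choose (m + 1)) *
      ∏ i ∈ Icc 1 n, ((∑ j, x j + l * n + n + m + 1 - (i : F)) / i) ^ (n - i + m).choose m := by
    simp only [det_binomMatrix, Comp.prod_pow_sum_tail, bch_eq_prod_Icc,
      Comp.prod_prod_Icc_apply fun i : ℕ => (∑ j, x j + l * n + n + m + 1 - (i : F)) / i]
  refine hdet.trans (congrArg _ (prod_congr rfl fun i hi => ?_))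
  rw [show n + (m + 1) - i - 1 = n - i + m by have := (mem_Icc.1 hi).2; lia]
  congr 2
  push_cast
  ring
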